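/- arXiv:2103.16343 — 5 statements merged into one kernel-verified Lean document; each statement's English description precedes it below -/
import Mathlib

section
/- Let f be a C¹ real-valued function on [0,1] that is infinitely differentiable at x = 0 and satisfies f⁽ⁿ⁾(0) = 0 for all n ∈ ℕ ∪ {0}. If there is a constant C > 0 such that |x·f′(x)| ≤ C·|f(x)| for every x ∈ [0,1], then f(x) = 0 for every x ∈ [0,1]. -/
open Set Filter
open scoped Topology

/-- **Stoica's theorem.** If `f` is `C¹` on `[0,1]`, infinitely (one-sidedly)
differentiable at `0` with all derivatives vanishing there, and
`|x·f′(x)| ≤ C·|f(x)|` on `[0,1]` for some `C > 0`, then `f ≡ 0` on `[0,1]`. -/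
theorem stmt_0 (f : ℝ → ℝ) (C : ℝ) (hC : 0 < C)
    (hf : ContDiffOn ℝ 1 f (Icc 0 1))
    (hsmooth : ContDiffWithinAt ℝ (⊤ : ℕ∞) f (Icc 0 1) 0)
    (hflat : ∀ n : ℕ, iteratedDerivWithin n f (Icc 0 1) 0 = 0)
    (hineq : ∀ x ∈ Icc (0 : ℝ) 1, |x * derivWithin f (Icc 0 1) x| ≤ C * |f x|) :
    ∀ x ∈ Icc (0 : ℝ) 1, f x = 0 := by
  obtain ⟨N, hN⟩ := exists_nat_ge C
  have hbound : ∃ δ > 0, δ ≤ 1 ∧ ∃ K : ℝ, ∀ y ∈ Icc (0 : ℝ) δ, |f y| ≤ K * y ^ (N + 1) := by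
    have h1 : ContDiffWithinAt ℝ ((N + 1 : ℕ) : WithTop ℕ∞) f (Icc 0 1) 0 :=
      contDiffWithinAt_infty.1 hsmooth (N + 1)
    obtain ⟨u, uo, hu, hcu⟩ := h1.contDiffOn' le_rfl (by simp)
    obtain ⟨ε, hε, hball⟩ := Metric.isOpen_iff.1 uo 0 hu
    have hδ : 0 < min (ε / 2) 1 := by positivity
    refine ⟨min (ε / 2) 1, hδ, min_le_right _ _, ?_⟩
    set δ := min (ε / 2) 1 with hδdef
    have hδ1 : δ ≤ 1 := min_le_right _ _
    have hδ2 : δ ≤ ε / 2 := min_le_left _ _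
    have hc : ContDiffOn ℝ ((N : WithTop ℕ∞) + 1) f (Icc 0 δ) := by
      have : ContDiffOn ℝ ((N + 1 : ℕ) : WithTop ℕ∞) f (Icc 0 δ) := by
        refine hcu.mono fun y hy => ⟨Or.inr ⟨hy.1, hy.2.trans hδ1⟩, hball ?_⟩
        rw [Metric.mem_ball, Real.dist_eq, sub_zero, abs_of_nonneg hy.1]
        linarith [hy.2]
      exact_mod_cast this
    obtain ⟨K, hK⟩ := exists_taylor_mean_remainder_bound hδ.le hc
    refine ⟨K, fun y hy => ?_⟩
    have h := hK y hy
    have hset : (Icc 0 δ : Set ℝ) =ᶠ[𝓝 0] Icc 0 1 := by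
      filter_upwards [Iio_mem_nhds hδ] with y hy
      apply propext
      exact ⟨fun h => ⟨h.1, h.2.trans hδ1⟩, fun h => ⟨h.1, le_of_lt hy⟩⟩
    have hz : ∀ k, iteratedDerivWithin k f (Icc 0 δ) 0 = 0 := by
      intro k
      have h0 := hflat k
      rw [iteratedDerivWithin] at h0 ⊢
      rw [iteratedFDerivWithin_congr_set hset, h0]
    rw [taylor_within_apply] at h
    simpa [hz] using h
  obtain ⟨δ, hδ, hδ1, K, hK⟩ := hbound
  have hder : ∀ x ∈ Ioo (0 : ℝ) 1, HasDerivAt f (derivWithin f (Icc 0 1) x) x := by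
    intro x hx
    exact ((hf.differentiableOn one_ne_zero x ⟨hx.1.le, hx.2.le⟩).hasDerivWithinAt).hasDerivAt
      (Icc_mem_nhds hx.1 hx.2)
  have hgder : ∀ x ∈ Ioo (0 : ℝ) 1, HasDerivAt (fun x => f x ^ 2 / x ^ (2 * N))
      ((2 * f x * derivWithin f (Icc 0 1) x * x ^ (2 * N)
        - f x ^ 2 * ((2 * N : ℕ) * x ^ (2 * N - 1))) / (x ^ (2 * N)) ^ 2) x := by
    intro x hx
    have h2 := ((hder x hx).pow 2).div (hasDerivAt_pow (2 * N) x) (pow_ne_zero _ hx.1.ne')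
    refine HasDerivAt.congr_deriv (f := fun x => f x ^ 2 / x ^ (2 * N)) h2 ?_
    simp
  have hanti : AntitoneOn (fun x => f x ^ 2 / x ^ (2 * N)) (Ioc (0 : ℝ) 1) := by
    apply antitoneOn_of_deriv_nonpos (convex_Ioc 0 1)
    · apply ContinuousOn.div
      · exact (hf.continuousOn.mono Ioc_subset_Icc_self).pow 2
      · fun_prop
      · exact fun x hx => pow_ne_zero _ hx.1.ne'
    · rw [interior_Ioc]
      exact fun x hx => (hgder x hx).differentiableAt.differentiableWithinAt
    · rw [interior_Ioc]
      intro x hx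
      rw [(hgder x hx).deriv]
      apply div_nonpos_of_nonpos_of_nonneg _ (by positivity)
      have hN0 : 0 < N := by exact_mod_cast hC.trans_le hN
      obtain ⟨m, hm⟩ : ∃ m, 2 * N = m + 1 := ⟨2 * N - 1, by omega⟩
      have hmR : ((2 * N : ℕ) : ℝ) = 2 * (N : ℝ) := by push_cast; ring
      rw [hmR, hm, Nat.add_sub_cancel, pow_succ]
      set d := derivWithin f (Icc 0 1) x
      have h1 : f x * (x * d) ≤ N * f x ^ 2 := by
        calc f x * (x * d) ≤ |f x * (x * d)| := le_abs_self _
          _ = |f x| * |x * d| := abs_mul _ _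
          _ ≤ |f x| * (C * |f x|) := by gcongr; exact hineq x ⟨hx.1.le, hx.2.le⟩
          _ = C * f x ^ 2 := by rw [← sq_abs (f x)]; ring
          _ ≤ N * f x ^ 2 := by gcongr
      have h2 : 0 ≤ x ^ m := pow_nonneg hx.1.le _
      nlinarith [mul_nonneg h2 (sub_nonneg.2 h1)]
  have hpos : ∀ x ∈ Ioc (0 : ℝ) 1, f x = 0 := by
    intro x hx
    have hle : f x ^ 2 / x ^ (2 * N) ≤ 0 := by
      have ht : Tendsto (fun y : ℝ => K ^ 2 * y ^ 2) (𝓝[>] 0) (𝓝 0) := by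
        have : Continuous fun y : ℝ => K ^ 2 * y ^ 2 := by fun_prop
        simpa using (this.tendsto 0).mono_left nhdsWithin_le_nhds
      refine ge_of_tendsto ht ?_
      filter_upwards [Ioo_mem_nhdsGT (lt_min hδ hx.1)] with y hy
      have hyδ : y ≤ δ := hy.2.le.trans (min_le_left _ _)
      have hyx : y ≤ x := hy.2.le.trans (min_le_right _ _)
      refine (hanti ⟨hy.1, hyδ.trans hδ1⟩ hx hyx).trans ?_
      have hy0 : 0 < y := hy.1
      show f y ^ 2 / y ^ (2 * N) ≤ _
      rw [div_le_iff₀ (by positivity)]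
      calc f y ^ 2 = |f y| ^ 2 := (sq_abs _).symm
        _ ≤ (K * y ^ (N + 1)) ^ 2 := by gcongr; exact hK y ⟨hy.1.le, hyδ⟩
        _ = K ^ 2 * y ^ 2 * y ^ (2 * N) := by ring
    have hxp : 0 < x ^ (2 * N) := pow_pos hx.1 _
    rw [div_le_iff₀ hxp, zero_mul] at hle
    exact pow_eq_zero_iff two_ne_zero |>.1 (le_antisymm hle (sq_nonneg _))
  intro x hx
  rcases hx.1.eq_or_lt with h | h
  · subst h
    simpa using hflat 0
  · exact hpos x ⟨h, hx.2⟩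
end

section
/- Let f : [0,1] → ℝ be continuously differentiable and suppose there is a constant C > 0 with |x·f′(x)| ≤ C·|f(x)| for every x ∈ [0,1]. If x₀ ∈ (0,1) satisfies f(x₀) = 0, then f(x) = 0 for every x ∈ [x₀, 1]. -/
open Set Filter
open scoped Topology

/-- If `f` is `C¹` on `[0,1]` with `|x·f′(x)| ≤ C·|f(x)|` on `[0,1]` for some `C > 0`,
then a zero of `f` at an interior point `x₀ ∈ (0,1)` propagates to the right:
`f = 0` on `[x₀, 1]`. -/
theorem stmt_1 (f : ℝ → ℝ) (C : ℝ) (hC : 0 < C)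
    (hf : ContDiffOn ℝ 1 f (Icc 0 1))
    (hineq : ∀ x ∈ Icc (0 : ℝ) 1, |x * derivWithin f (Icc 0 1) x| ≤ C * |f x|)
    (x₀ : ℝ) (hx₀ : x₀ ∈ Ioo (0 : ℝ) 1) (hfx₀ : f x₀ = 0) :
    ∀ x ∈ Icc x₀ 1, f x = 0 := by
  obtain ⟨h0, h1⟩ := hx₀
  refine eq_zero_of_abs_deriv_le_mul_abs_self_of_eq_zero_right
    (f' := derivWithin f (Icc 0 1)) (K := C / x₀)
    (hf.continuousOn.mono (Icc_subset_Icc_left h0.le)) ?_ hfx₀ ?_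
  · intro x hx
    have hd := (hf.differentiableOn one_ne_zero x ⟨h0.le.trans hx.1, hx.2.le⟩).hasDerivWithinAt
    exact (hd.hasDerivAt (Icc_mem_nhds (h0.trans_le hx.1) hx.2)).hasDerivWithinAt
  · intro x hx
    have h := hineq x ⟨h0.le.trans hx.1, hx.2.le⟩
    rw [abs_mul, abs_of_pos (h0.trans_le hx.1)] at h
    rw [Real.norm_eq_abs, Real.norm_eq_abs, div_mul_eq_mul_div, le_div_iff₀ h0, mul_comm]
    exact (mul_le_mul_of_nonneg_right hx.1 (abs_nonneg _)).trans h
end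

section
/- Let f : [0,1] → ℝ be continuously differentiable and suppose there is a constant C > 0 with |x·f′(x)| ≤ C·|f(x)| for every x ∈ [0,1]. If 0 < δ ≤ 1 and f(x) > 0 for all x ∈ (0, δ], then f(x) ≥ (f(δ)/δ^C)·x^C for every x ∈ (0, δ]. -/
open Set Filter
open scoped Topology

/-- Polynomial lower bound via Gronwall: if `f` is `C¹` on `[0,1]`,
`|x·f′(x)| ≤ C·|f(x)|` on `[0,1]` for some `C > 0`, and `f > 0` on `(0, δ]` with
`0 < δ ≤ 1`, then `f(x) ≥ (f(δ)/δ^C)·x^C` on `(0, δ]` (real powers). -/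
theorem stmt_2 (f : ℝ → ℝ) (C : ℝ) (hC : 0 < C)
    (hf : ContDiffOn ℝ 1 f (Icc 0 1))
    (hineq : ∀ x ∈ Icc (0 : ℝ) 1, |x * derivWithin f (Icc 0 1) x| ≤ C * |f x|)
    (δ : ℝ) (hδ0 : 0 < δ) (hδ1 : δ ≤ 1)
    (hpos : ∀ x ∈ Ioc (0 : ℝ) δ, 0 < f x) :
    ∀ x ∈ Ioc (0 : ℝ) δ, (f δ / δ ^ C) * x ^ C ≤ f x := by
  have hd : ∀ x ∈ Ioo (0 : ℝ) δ,
      HasDerivAt (fun y => f y * y ^ (-C))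
        (derivWithin f (Icc 0 1) x * x ^ (-C) + f x * (-C * x ^ (-C - 1))) x := by
    intro x hx
    have hmem : Icc (0 : ℝ) 1 ∈ 𝓝 x := Icc_mem_nhds hx.1 (lt_of_lt_of_le hx.2 hδ1)
    have h1 : HasDerivAt f (derivWithin f (Icc 0 1) x) x :=
      (((hf.differentiableOn (by norm_num)) x
        ⟨hx.1.le, hx.2.le.trans hδ1⟩).hasDerivWithinAt).hasDerivAt hmem
    exact h1.mul (Real.hasDerivAt_rpow_const (Or.inl hx.1.ne'))
  have hanti : AntitoneOn (fun y => f y * y ^ (-C)) (Ioc 0 δ) := by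
    apply antitoneOn_of_deriv_nonpos (convex_Ioc 0 δ)
    · apply ContinuousOn.mul
      · exact hf.continuousOn.mono fun y hy => ⟨hy.1.le, hy.2.trans hδ1⟩
      · exact fun y hy =>
          (Real.continuousAt_rpow_const y (-C) (Or.inl hy.1.ne')).continuousWithinAt
    · rw [interior_Ioc]
      exact fun x hx => (hd x hx).differentiableAt.differentiableWithinAt
    · rw [interior_Ioc]
      intro x hx
      rw [(hd x hx).deriv]
      have hfx := hpos x ⟨hx.1, hx.2.le⟩
      have h2 := (le_abs_self _).trans (hineq x ⟨hx.1.le, hx.2.le.trans hδ1⟩)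
      rw [abs_of_pos hfx] at h2
      have h3 : x ^ (-C) = x ^ (-C - 1) * x := by
        rw [Real.rpow_sub_one hx.1.ne']
        field_simp [hx.1.ne']
      have h4 : 0 < x ^ (-C - 1) := Real.rpow_pos_of_pos hx.1 _
      rw [h3]
      nlinarith
  intro x hx
  have h := hanti hx ⟨hδ0, le_rfl⟩ hx.2
  simp only [Real.rpow_neg hx.1.le, Real.rpow_neg hδ0.le, ← div_eq_mul_inv] at h
  exact (le_div_iff₀ (Real.rpow_pos_of_pos hx.1 C)).mp h
end

section
/- Let U ⊆ ℝⁿ be open, a ∈ U, and X : U → ℝⁿ a C¹ vector field with X(a) = 0 such that every eigenvalue of the Jacobian matrix JX(a) has strictly negative real part (a is a hyperbolic sink). Then there exist an open set V ⊆ U containing a and constants θ > 0, λ > 0 such that: for every x ∈ V there is a differentiable curve γ : [0,∞) → U with γ(0) = x and γ′(t) = X(γ(t)) for all t ≥ 0, and every such curve satisfies ‖γ(t) − a‖ ≤ θ·e^{−λ t}·‖x − a‖ for all t > 0. -/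
open Set Filter
open scoped Topology

attribute [local instance] Matrix.linftyOpNormedRing Matrix.linftyOpNormedAlgebra in
theorem aux_pow_tendsto {n : ℕ} (C : Matrix (Fin n) (Fin n) ℂ)
    (h : ∀ z ∈ spectrum ℂ C, ‖z‖ < 1) :
    Tendsto (fun k : ℕ => C ^ k) atTop (𝓝 0) := by
  have hr : spectralRadius ℂ C < 1 := by
    rcases (spectrum ℂ C).eq_empty_or_nonempty with he | hne
    · simp [spectralRadius, he]
    · have := spectrum.spectralRadius_lt_of_forall_lt_of_nonempty (a := C) hne (r := 1)
        (fun z hz => by exact_mod_cast h z hz)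
      simpa using this
  obtain ⟨q, hq1, hq2⟩ := exists_between hr
  have hlim := spectrum.pow_nnnorm_pow_one_div_tendsto_nhds_spectralRadius C
  have hq_top : q ≠ ⊤ := (hq2.trans ENNReal.one_lt_top).ne
  lift q to NNReal using hq_top
  have hq2' : q < 1 := by exact_mod_cast hq2
  have ev : ∀ᶠ k : ℕ in atTop, ‖C ^ k‖ ≤ (q : ℝ) ^ k := by
    filter_upwards [hlim.eventually_lt_const hq1, eventually_gt_atTop 0] with k hk hk0
    have hk0' : (0 : ℝ) < k := by exact_mod_cast hk0
    have h1 : (‖C ^ k‖₊ : ENNReal) ≤ (q : ENNReal) ^ (k : ℝ) := by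
      have := ENNReal.rpow_le_rpow hk.le hk0'.le
      rwa [← ENNReal.rpow_mul, one_div, inv_mul_cancel₀ hk0'.ne', ENNReal.rpow_one] at this
    rw [ENNReal.rpow_natCast] at h1
    exact_mod_cast h1
  exact squeeze_zero_norm' ev (tendsto_pow_atTop_nhds_zero_of_lt_one q.2 (by exact_mod_cast hq2'))

theorem aux_eps {n : ℕ} (M : Matrix (Fin n) (Fin n) ℂ)
    (h : ∀ μ : ℂ, M.charpoly.IsRoot μ → μ.re < 0) :
    ∃ ε : ℝ, 0 < ε ∧ ∀ z ∈ spectrum ℂ (1 + (ε : ℂ) • M), ‖z‖ < 1 := by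
  have hne : M.charpoly ≠ 0 := M.charpoly_monic.ne_zero
  have ev : ∀ᶠ ε : ℝ in 𝓝[>] 0, ∀ μ ∈ M.charpoly.roots.toFinset, ‖1 + (ε : ℂ) * μ‖ < 1 := by
    rw [Filter.eventually_all_finset]
    intro μ hμ
    have hμ' : μ.re < 0 := h μ (by simpa [hne] using hμ)
    have hc : Tendsto (fun ε : ℝ => 2 * μ.re + ε * Complex.normSq μ) (𝓝[>] 0) (𝓝 (2 * μ.re + 0 * Complex.normSq μ)) := by
      apply Tendsto.mono_left _ nhdsWithin_le_nhds
      exact Continuous.tendsto (by fun_prop) 0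
    filter_upwards [hc.eventually_lt_const (show _ < (0:ℝ) by linarith), self_mem_nhdsWithin] with ε h1 h2
    have h2 : 0 < ε := h2
    have : ‖1 + (ε : ℂ) * μ‖ ^ 2 < 1 := by
      rw [← Complex.normSq_eq_norm_sq, Complex.normSq_apply]
      rw [Complex.normSq_apply] at h1
      simp
      nlinarith
    exact (sq_lt_one_iff₀ (norm_nonneg _)).1 this
  obtain ⟨ε, h1, h2⟩ := (ev.and self_mem_nhdsWithin).exists
  have h2 : 0 < ε := h2
  refine ⟨ε, h2, fun z hz => ?_⟩
  have hε : (ε : ℂ) ≠ 0 := by exact_mod_cast h2.ne'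
  have hmem : (z - 1) / ε ∈ spectrum ℂ M := by
    rw [spectrum.mem_iff] at hz ⊢
    intro hu
    apply hz
    have : algebraMap ℂ (Matrix (Fin n) (Fin n) ℂ) z - (1 + (ε : ℂ) • M)
        = (Units.mk0 (ε : ℂ) hε) • (algebraMap ℂ (Matrix (Fin n) (Fin n) ℂ) ((z - 1) / ε) - M) := by
      simp only [Algebra.algebraMap_eq_smul_one, Units.smul_def, Units.val_mk0, smul_sub, smul_smul]
      rw [mul_div_cancel₀ _ hε, sub_smul, one_smul]
      abel
    rw [this]
    exact hu.smul _
  rw [Matrix.mem_spectrum_iff_isRoot_charpoly] at hmem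
  have := h1 ((z - 1) / ε) (by simpa [hne] using hmem)
  rwa [mul_div_cancel₀ _ hε, add_sub_cancel] at this

theorem aux_contr {n : ℕ} (A : EuclideanSpace ℝ (Fin n) →L[ℝ] EuclideanSpace ℝ (Fin n))
    (heig : ∀ μ : ℂ,
      (Matrix.charpoly
        ((Matrix.of fun i j => A (EuclideanSpace.single j 1) i).map
          Complex.ofReal)).IsRoot μ → μ.re < 0) :
    ∃ ε : ℝ, 0 < ε ∧ ∃ N : ℕ, 0 < N ∧ ‖(1 + ε • A) ^ N‖ < 1 / 2 := by
  obtain ⟨ε, hε, h⟩ := aux_eps _ heig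
  refine ⟨ε, hε, ?_⟩
  set M : Matrix (Fin n) (Fin n) ℝ := Matrix.of fun i j => A (EuclideanSpace.single j 1) i with hM
  have hA : Matrix.toEuclideanCLM (𝕜 := ℝ) M = A := by
    apply ContinuousLinearMap.coe_injective
    apply (EuclideanSpace.basisFun (Fin n) ℝ).toBasis.ext
    intro j
    ext i
    simp [hM, Matrix.ofLp_toEuclideanCLM]
  have ht := aux_pow_tendsto _ h
  have hmap : ∀ k : ℕ, (1 + (ε : ℂ) • M.map Complex.ofReal) ^ k
      = ((1 + ε • M) ^ k).map Complex.ofReal := by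
    intro k
    have h1 : (1 + (ε : ℂ) • M.map Complex.ofReal) = Complex.ofRealHom.mapMatrix (1 + ε • M) := by
      rw [map_add, map_one]
      congr 1
      ext i j
      simp
    rw [h1, ← map_pow]
    rfl
  have hreal : Tendsto (fun k : ℕ => (1 + ε • M) ^ k) atTop (𝓝 0) := by
    refine tendsto_pi_nhds.2 fun i => tendsto_pi_nhds.2 fun j => ?_
    have h2 := (tendsto_pi_nhds.1 (tendsto_pi_nhds.1 ht i) j)
    have h3 := (Complex.continuous_re.tendsto _).comp h2
    simp only [Function.comp_def, hmap] at h3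
    simpa only [Matrix.map_apply, Matrix.zero_apply, Complex.ofReal_re, Complex.zero_re] using h3
  have hcont : Continuous (Matrix.toEuclideanCLM (n := Fin n) (𝕜 := ℝ)) :=
    LinearMap.continuous_of_finiteDimensional
      (Matrix.toEuclideanCLM (n := Fin n) (𝕜 := ℝ)).toAlgEquiv.toLinearMap
  have h4 := ((hcont.tendsto 0).comp hreal).norm
  simp only [Function.comp_def, map_pow, map_add, map_one, map_smul, hA, map_zero, norm_zero] at h4
  obtain ⟨N, h5, h6⟩ := ((h4.eventually_lt_const (show (0:ℝ) < 1/2 by norm_num)).and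
    (eventually_gt_atTop 0)).exists
  exact ⟨N, h6, h5⟩

theorem aux_lyap {E : Type*} [NormedAddCommGroup E] [InnerProductSpace ℝ E]
    (A : E →L[ℝ] E) (ε : ℝ) (hε : 0 < ε) (N : ℕ) (hN : 0 < N)
    (h : ‖(1 + ε • A) ^ N‖ < 1 / 2) :
    ∃ b : E →L[ℝ] E →L[ℝ] ℝ, (∀ x y, b x y = b y x) ∧ (∀ x, ‖x‖ ^ 2 ≤ b x x) ∧
      ∃ c > 0, ∀ x, b x (A x) ≤ - c * ‖x‖ ^ 2 := by
  set B := 1 + ε • A with hB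
  let b : E →L[ℝ] E →L[ℝ] ℝ := ∑ k ∈ Finset.range N, (innerSL ℝ).bilinearComp (B ^ k) (B ^ k)
  have hb : ∀ x y, b x y = ∑ k ∈ Finset.range N, inner ℝ ((B ^ k) x) ((B ^ k) y) := by
    intro x y
    simp [b]
  have hsymm : ∀ x y, b x y = b y x := by
    intro x y
    rw [hb, hb]
    exact Finset.sum_congr rfl fun k _ => real_inner_comm _ _
  have hnn : ∀ x, 0 ≤ b x x := by
    intro x
    rw [hb]
    exact Finset.sum_nonneg fun k _ => real_inner_self_nonneg
  refine ⟨b, hsymm, ?_, 3 / (8 * ε), by positivity, ?_⟩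
  · intro x
    rw [hb]
    have := Finset.single_le_sum (f := fun k => inner ℝ ((B ^ k) x) ((B ^ k) x))
      (fun k _ => real_inner_self_nonneg) (Finset.mem_range.2 hN)
    simpa using this
  · intro x
    have h1 : b (B x) (B x) - b x x = ‖(B ^ N) x‖ ^ 2 - ‖x‖ ^ 2 := by
      rw [hb, hb, ← Finset.sum_sub_distrib]
      have := Finset.sum_range_sub (fun k => inner ℝ ((B ^ k) x) ((B ^ k) x)) N
      simp only [pow_succ, mul_apply_eq_comp] at this
      rw [this]
      simp
    have h2 : b (B x) (B x) = b x x + 2 * ε * b x (A x) + ε ^ 2 * b (A x) (A x) := by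
      simp only [hB, add_apply, one_apply_eq_self, map_add,
        smul_apply, map_smul, smul_eq_mul]
      rw [hsymm (A x) x]
      ring
    have h3 : ‖(B ^ N) x‖ ≤ 1 / 2 * ‖x‖ := (B ^ N).le_of_opNorm_le h.le x
    have h4 : ‖(B ^ N) x‖ ^ 2 ≤ (1 / 2 * ‖x‖) ^ 2 := by gcongr
    have h5 : 0 ≤ ε ^ 2 * b (A x) (A x) := mul_nonneg (by positivity) (hnn _)
    have h6 : ε * b x (A x) ≤ ε * (-(3 / (8 * ε)) * ‖x‖ ^ 2) := by
      have : ε * (-(3 / (8 * ε)) * ‖x‖ ^ 2) = - (3/8) * ‖x‖^2 := by field_simp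
      rw [this]
      nlinarith
    exact le_of_mul_le_mul_left h6 hε

theorem aux_decay {E : Type*} [NormedAddCommGroup E] [InnerProductSpace ℝ E]
    (b : E →L[ℝ] E →L[ℝ] ℝ) (hs : ∀ x y, b x y = b y x) (hp : ∀ x, ‖x‖ ^ 2 ≤ b x x)
    (a : E) (Z : E → E) (l r : ℝ) (hl : 0 < l)
    (hZ : ∀ x, b (x - a) (x - a) < r → b (x - a) (Z x) ≤ - l * b (x - a) (x - a))
    (γ : ℝ → E) (hγ : ∀ t, 0 ≤ t → HasDerivAt γ (Z (γ t)) t)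
    (h0 : b (γ 0 - a) (γ 0 - a) < r) (t : ℝ) (ht : 0 ≤ t) :
    b (γ t - a) (γ t - a) ≤ b (γ 0 - a) (γ 0 - a) * Real.exp (- l * t) := by
  have hd : ∀ t, 0 ≤ t → HasDerivAt (fun t => b (γ t - a) (γ t - a))
      (2 * b (γ t - a) (Z (γ t))) t := by
    intro t ht
    have h1 := (hγ t ht).sub_const a
    have h2 := (b.hasFDerivAt.comp_hasDerivAt t h1).clm_apply h1
    rw [hs (Z (γ t))] at h2
    rw [two_mul]
    exact h2
  set q0 := b (γ 0 - a) (γ 0 - a) with hq0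
  have hq0n : 0 ≤ q0 := (sq_nonneg _).trans (hp _)
  have key : ∀ q, q0 < q → q < r → b (γ t - a) (γ t - a) ≤ q * Real.exp (- l * t) := by
    intro q h1 h2
    refine image_le_of_deriv_right_lt_deriv_boundary (a := 0) (b := t)
      (f := fun t => b (γ t - a) (γ t - a)) (f' := fun t => 2 * b (γ t - a) (Z (γ t)))
      (B := fun t => q * Real.exp (- l * t)) (B' := fun t => q * (Real.exp (- l * t) * (- l)))
      (fun s hs => (hd s hs.1).continuousAt.continuousWithinAt)
      (fun s hs => (hd s hs.1).hasDerivWithinAt) ?_ ?_ ?_ ⟨ht, le_rfl⟩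
    · show q0 ≤ q * Real.exp (- l * 0)
      rw [mul_zero, Real.exp_zero, mul_one]
      exact h1.le
    · intro s
      have := ((hasDerivAt_id s).const_mul (-l)).exp.const_mul q
      simpa using this
    · intro s hs he
      have he : b (γ s - a) (γ s - a) = q * Real.exp (- l * s) := he
      have h3 : Real.exp (- l * s) ≤ 1 := Real.exp_le_one_iff.2 (by nlinarith [hs.1])
      have hq : 0 < q := hq0n.trans_lt h1
      have h4 : b (γ s - a) (γ s - a) < r := by rw [he]; nlinarith
      have h5 := hZ _ h4
      rw [he] at h5
      have h6 : 0 < l * (q * Real.exp (- l * s)) := by positivity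
      show 2 * b (γ s - a) (Z (γ s)) < _
      nlinarith
  have htend : Tendsto (fun q => q * Real.exp (- l * t)) (𝓝[>] q0) (𝓝 (q0 * Real.exp (-l * t))) :=
    (Continuous.tendsto (by fun_prop) q0).mono_left nhdsWithin_le_nhds
  refine ge_of_tendsto htend ?_
  filter_upwards [Ioo_mem_nhdsGT h0] with q hq using key q hq.1 hq.2

theorem aux_exist {E : Type*} [NormedAddCommGroup E] [NormedSpace ℝ E] [CompleteSpace E]
    (Y : E → E) (K L : NNReal) (hK : LipschitzWith K Y) (hL : ∀ x, ‖Y x‖ ≤ L) (x : E) :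
    ∃ γ : ℝ → E, γ 0 = x ∧ ∀ t, HasDerivAt γ (Y (γ t)) t := by
  have h1 : ∀ T : ℝ, 0 < T → ∃ γ : ℝ → E, γ 0 = x ∧ ∀ t ∈ Ioo (-T) T, HasDerivAt γ (Y (γ t)) t := by
    intro T hT
    have hpl : IsPicardLindelof (fun _ => Y) (tmin := -T) (tmax := T) ⟨0, by simp [hT.le]⟩ x
        (L * T.toNNReal) 0 L K :=
      { lipschitzOnWith := fun t _ => hK.lipschitzOnWith
        continuousOn := fun y _ => continuousOn_const
        norm_le := fun t _ y _ => hL y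
        mul_max_le := by simp [hT.le] }
    obtain ⟨α, h0, h⟩ := hpl.exists_eq_forall_mem_Icc_hasDerivWithinAt₀
    exact ⟨α, h0, fun t ht => (h t (Ioo_subset_Icc_self ht)).hasDerivAt (Icc_mem_nhds ht.1 ht.2)⟩
  choose! g hg0 hg using h1
  have heq : ∀ S T : ℝ, 0 < S → S ≤ T → EqOn (g S) (g T) (Ioo (-S) S) := by
    intro S T hS hST
    refine ODE_solution_unique_of_mem_Ioo (v := fun _ => Y) (s := fun _ => univ) (K := K) (t₀ := 0)
      (fun t _ => hK.lipschitzOnWith) ⟨by linarith, hS⟩ (fun t ht => ⟨hg S hS t ht, trivial⟩)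
      (fun t ht => ⟨hg T (hS.trans_le hST) t ⟨by linarith [ht.1], by linarith [ht.2]⟩, trivial⟩) ?_
    rw [hg0 S hS, hg0 T (hS.trans_le hST)]
  refine ⟨fun t => g (|t| + 1) t, by simp [hg0], fun t => ?_⟩
  have ht : t ∈ Ioo (-(|t| + 2)) (|t| + 2) := by
    constructor
    · linarith [neg_abs_le t]
    · linarith [le_abs_self t]
  have h2 : ∀ s, |s| < |t| + 1 → g (|s| + 1) s = g (|t| + 2) s := by
    intro s hs
    refine heq _ _ (by positivity) (by linarith) ⟨?_, ?_⟩
    · linarith [neg_abs_le s]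
    · linarith [le_abs_self s]
  have h3 : (fun s => g (|s| + 1) s) =ᶠ[𝓝 t] g (|t| + 2) := by
    have : ∀ᶠ s in 𝓝 t, |s| < |t| + 1 :=
      (continuous_abs.tendsto t).eventually_lt_const (by linarith)
    filter_upwards [this] with s hs using h2 s hs
  show HasDerivAt _ (Y (g (|t| + 1) t)) t
  rw [show g (|t| + 1) t = g (|t| + 2) t from h2 t (by linarith)]
  exact (hg _ (by positivity) t ht).congr_of_eventuallyEq h3

/-- Exponential stability of a hyperbolic sink: if `X` is a `C¹` vector field on
an open set `U ∋ a` with `X(a) = 0` and all complex eigenvalues of the Jacobian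
`JX(a)` having negative real part, then there are a neighborhood `V ∋ a` and
constants `θ, λ > 0` such that through every `x ∈ V` there is a forward solution
of `γ′ = X(γ)` staying in `U`, and every such solution satisfies
`‖γ(t) - a‖ ≤ θ·e^{-λt}·‖x - a‖` for `t > 0`. -/
theorem stmt_10 (n : ℕ) (U : Set (EuclideanSpace ℝ (Fin n))) (hU : IsOpen U)
    (a : EuclideanSpace ℝ (Fin n)) (haU : a ∈ U)
    (X : EuclideanSpace ℝ (Fin n) → EuclideanSpace ℝ (Fin n))
    (hX : ContDiffOn ℝ 1 X U) (hXa : X a = 0)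
    (heig : ∀ μ : ℂ,
      (Matrix.charpoly
        ((Matrix.of fun i j => fderiv ℝ X a (EuclideanSpace.single j 1) i).map
          Complex.ofReal)).IsRoot μ → μ.re < 0) :
    ∃ V : Set (EuclideanSpace ℝ (Fin n)), IsOpen V ∧ a ∈ V ∧ V ⊆ U ∧
      ∃ θ > (0 : ℝ), ∃ l > (0 : ℝ), ∀ x ∈ V,
        (∃ γ : ℝ → EuclideanSpace ℝ (Fin n), γ 0 = x ∧
          ∀ t : ℝ, 0 ≤ t → γ t ∈ U ∧ HasDerivAt γ (X (γ t)) t) ∧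
        ∀ γ : ℝ → EuclideanSpace ℝ (Fin n),
          (γ 0 = x ∧ ∀ t : ℝ, 0 ≤ t → γ t ∈ U ∧ HasDerivAt γ (X (γ t)) t) →
          ∀ t : ℝ, 0 < t → ‖γ t - a‖ ≤ θ * Real.exp (-l * t) * ‖x - a‖ := by
  set A := fderiv ℝ X a with hA
  obtain ⟨ε, hε, N, hN, hcon⟩ := aux_contr A heig
  obtain ⟨b, hs, hp, c, hc, hbA⟩ := aux_lyap A ε hε N hN hcon
  have hder : HasFDerivAt X A a :=
    ((hX.contDiffAt (hU.mem_nhds haU)).differentiableAt (by simp)).hasFDerivAt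
  set M : ℝ := ‖b‖ + 1 with hM
  have hM0 : 0 < M := by positivity
  have hbM : ∀ x y, b x y ≤ M * ‖x‖ * ‖y‖ := by
    intro x y
    have h1 := (le_abs_self _).trans (b.le_opNorm₂ x y)
    have h2 : ‖b‖ * ‖x‖ * ‖y‖ ≤ M * ‖x‖ * ‖y‖ := by
      gcongr
      linarith
    exact h1.trans h2
  have hev : ∀ᶠ x in 𝓝 a, ‖X x - X a - A (x - a)‖ ≤ c / (2 * M) * ‖x - a‖ :=
    hder.isLittleO.bound (by positivity)
  obtain ⟨δ, hδ, hball⟩ := Metric.eventually_nhds_iff_ball.1 (hev.and (hU.mem_nhds haU))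
  have hVd : ∀ x, b (x - a) (x - a) < (δ / 3) ^ 2 → ‖x - a‖ < δ / 3 := by
    intro x hx
    exact lt_of_pow_lt_pow_left₀ 2 (by positivity) ((hp _).trans_lt hx)
  set l : ℝ := c / (2 * M) with hl
  have hl0 : 0 < l := by positivity
  have hlM : l * M = c / 2 := by rw [hl]; field_simp
  have hdec : ∀ x, b (x - a) (x - a) < (δ / 3) ^ 2 →
      b (x - a) (X x) ≤ - l * b (x - a) (x - a) := by
    intro x hx
    have h1 := hVd x hx
    have h2 := (hball x (by rw [mem_ball_iff_norm]; linarith)).1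
    rw [hXa, sub_zero] at h2
    have h3 : b (x - a) (X x) = b (x - a) (A (x - a)) + b (x - a) (X x - A (x - a)) := by
      rw [← map_add]
      congr 1
      abel
    have h4 := hbM (x - a) (X x - A (x - a))
    have h5 : M * ‖x - a‖ * ‖X x - A (x - a)‖ ≤ M * ‖x - a‖ * (l * ‖x - a‖) := by gcongr
    have h6 : M * ‖x - a‖ * (l * ‖x - a‖) = c / 2 * ‖x - a‖ ^ 2 := by rw [← hlM]; ring
    have h7 := hbA (x - a)
    have h8 : l * b (x - a) (x - a) ≤ l * (M * ‖x - a‖ * ‖x - a‖) := by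
      gcongr
      exact hbM _ _
    have h9 : l * (M * ‖x - a‖ * ‖x - a‖) = c / 2 * ‖x - a‖ ^ 2 := by rw [← hlM]; ring
    linarith
  have hVU : ∀ x, b (x - a) (x - a) < (δ / 3) ^ 2 → x ∈ U := fun x hx =>
    (hball x (by rw [mem_ball_iff_norm]; linarith [hVd x hx])).2
  refine ⟨{x | b (x - a) (x - a) < (δ / 3) ^ 2}, ?_, ?_, hVU, √M, by positivity, l / 2,
    by positivity, ?_⟩
  · refine isOpen_lt ?_ continuous_const
    fun_prop
  · show b (a - a) (a - a) < (δ / 3) ^ 2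
    rw [sub_self, map_zero]
    positivity
  intro x hx
  have hx : b (x - a) (x - a) < (δ / 3) ^ 2 := hx
  constructor
  · let χ : ContDiffBump a := ⟨δ / 3, δ / 2, by positivity, by linarith⟩
    let Y : EuclideanSpace ℝ (Fin n) → EuclideanSpace ℝ (Fin n) := fun y => χ y • X y
    have hYX : ∀ y, b (y - a) (y - a) < (δ / 3) ^ 2 → Y y = X y := by
      intro y hy
      have : χ y = 1 := χ.one_of_mem_closedBall (by
        rw [mem_closedBall_iff_norm]; exact (hVd y hy).le)
      simp [Y, this]
    have hYs : HasCompactSupport Y := χ.hasCompactSupport.smul_right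
    have hYc : ContDiff ℝ 1 Y := by
      rw [contDiff_iff_contDiffAt]
      intro y
      by_cases hy : y ∈ tsupport χ
      · have hyU : y ∈ U := by
          refine (hball y ?_).2
          rw [χ.tsupport_eq, mem_closedBall_iff_norm] at hy
          have hy : ‖y - a‖ ≤ δ / 2 := hy
          rw [mem_ball_iff_norm]
          linarith
        exact χ.contDiffAt.smul (hX.contDiffAt (hU.mem_nhds hyU))
      · have h1 : Y =ᶠ[𝓝 y] fun _ => 0 := by
          filter_upwards [notMem_tsupport_iff_eventuallyEq.1 hy] with z hz
          simp [Y, hz]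
        exact contDiffAt_const.congr_of_eventuallyEq h1
    obtain ⟨K, hK⟩ := ContDiff.lipschitzWith_of_hasCompactSupport hYs hYc one_ne_zero
    obtain ⟨L, hL⟩ := hYs.exists_bound_of_continuous hYc.continuous
    obtain ⟨γ, h0, hγ⟩ := aux_exist Y K L.toNNReal hK
      (fun y => (hL y).trans (Real.le_coe_toNNReal L)) x
    have hin : ∀ t, 0 ≤ t → b (γ t - a) (γ t - a) < (δ / 3) ^ 2 := by
      intro t ht
      have h1 := aux_decay b hs hp a Y l _ hl0 (fun y hy => by rw [hYX y hy]; exact hdec y hy)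
        γ (fun t _ => hγ t) (by rw [h0]; exact hx) t ht
      rw [h0] at h1
      have h2 : Real.exp (- l * t) ≤ 1 := Real.exp_le_one_iff.2 (by nlinarith)
      have h3 : 0 ≤ b (x - a) (x - a) := (sq_nonneg _).trans (hp _)
      nlinarith
    refine ⟨γ, h0, fun t ht => ⟨hVU _ (hin t ht), ?_⟩⟩
    rw [← hYX _ (hin t ht)]
    exact hγ t
  · rintro γ ⟨h0, hγ⟩ t ht
    have h1 := aux_decay b hs hp a X l _ hl0 hdec γ (fun t ht => (hγ t ht).2)
      (by rw [h0]; exact hx) t ht.le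
    rw [h0] at h1
    have h2 : b (x - a) (x - a) * Real.exp (- l * t)
        ≤ M * ‖x - a‖ * ‖x - a‖ * Real.exp (- l * t) := by
      gcongr
      exact hbM _ _
    have h3 : (√M * Real.exp (-(l / 2) * t) * ‖x - a‖) ^ 2
        = M * ‖x - a‖ * ‖x - a‖ * Real.exp (- l * t) := by
      rw [mul_pow, mul_pow, Real.sq_sqrt hM0.le, ← Real.exp_nat_mul]
      rw [show ((2 : ℕ) : ℝ) * (-(l / 2) * t) = - l * t by push_cast; ring]
      ring
    refine le_of_sq_le_sq ?_ (by positivity)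
    rw [h3]
    exact (hp _).trans (h1.trans h2)
end

section
/- Let U ⊆ ℝⁿ be open, h : U → ℝⁿ continuous, and f : U → ℝ a C¹ function with |⟨∇f(x), h(x)⟩| ≤ c·|f(x)| for all x ∈ U, for some constant c > 0. Let γ : [0,∞) → U be a differentiable curve with γ′(t) = −h(γ(t)) for all t ≥ 0, and suppose there are constants θ > 0 and λ > 0 with ‖γ(t)‖ ≤ θ·e^{−λ t}·‖γ(0)‖ for all t > 0, with γ(0) ≠ 0 and f(γ(0)) > 0. Then f(γ(t)) ≥ (f(γ(0))/(θ‖γ(0)‖)^{c/λ})·‖γ(t)‖^{c/λ} for all t ≥ 0; consequently f cannot satisfy lim_{x→0} |f(x)|/‖x‖^k = 0 for every k ∈ ℕ, i.e. f is not flat at 0. -/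
open Set Filter
open scoped Topology

/-- Power-law lower bound along an orbit decaying to the origin: if
`|⟨∇f(x), h(x)⟩| ≤ c·|f(x)|` on `U`, `γ : [0,∞) → U` solves `γ′ = -h(γ)` with
`‖γ(t)‖ ≤ θ·e^{-λt}·‖γ(0)‖` for `t > 0`, `γ(0) ≠ 0` and `f(γ(0)) > 0`, then
`f(γ(t)) ≥ (f(γ(0))/(θ‖γ(0)‖)^{c/λ})·‖γ(t)‖^{c/λ}` for all `t ≥ 0`; consequently
`f` is not flat at `0`. -/
theorem stmt_11 (n : ℕ) (U : Set (EuclideanSpace ℝ (Fin n))) (hU : IsOpen U)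
    (h : EuclideanSpace ℝ (Fin n) → EuclideanSpace ℝ (Fin n))
    (hh : ContinuousOn h U)
    (f : EuclideanSpace ℝ (Fin n) → ℝ) (hf : ContDiffOn ℝ 1 f U)
    (c : ℝ) (hc : 0 < c)
    (hineq : ∀ x ∈ U, |fderiv ℝ f x (h x)| ≤ c * |f x|)
    (γ : ℝ → EuclideanSpace ℝ (Fin n))
    (hγU : ∀ t : ℝ, 0 ≤ t → γ t ∈ U)
    (hγ' : ∀ t : ℝ, 0 ≤ t → HasDerivAt γ (-h (γ t)) t)
    (θ l : ℝ) (hθ : 0 < θ) (hl : 0 < l)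
    (hdecay : ∀ t : ℝ, 0 < t → ‖γ t‖ ≤ θ * Real.exp (-l * t) * ‖γ 0‖)
    (hγ0 : γ 0 ≠ 0) (hfγ0 : 0 < f (γ 0)) :
    (∀ t : ℝ, 0 ≤ t →
        (f (γ 0) / (θ * ‖γ 0‖) ^ (c / l)) * ‖γ t‖ ^ (c / l) ≤ f (γ t)) ∧
      ¬ (∀ k : ℕ, Tendsto (fun x => |f x| / ‖x‖ ^ k)
          (𝓝[≠] (0 : EuclideanSpace ℝ (Fin n))) (𝓝 0)) := by
  have hg' : ∀ t : ℝ, 0 ≤ t →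
      HasDerivAt (fun s => f (γ s)) (-(fderiv ℝ f (γ t) (h (γ t)))) t := by
    intro t ht
    have h1 : DifferentiableAt ℝ f (γ t) :=
      (hf.differentiableOn one_ne_zero).differentiableAt (hU.mem_nhds (hγU t ht))
    have h2 := h1.hasFDerivAt.comp_hasDerivAt t (hγ' t ht)
    rw [map_neg] at h2
    exact h2
  have hgc : ContinuousOn (fun s => f (γ s)) (Ici 0) := fun t ht =>
    (hg' t ht).continuousAt.continuousWithinAt
  have hG' : ∀ t : ℝ, 0 ≤ t → HasDerivAt (fun s => f (γ s) ^ 2 * Real.exp (2 * c * s))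
      ((2 * f (γ t) * (-(fderiv ℝ f (γ t) (h (γ t)))) + 2 * c * f (γ t) ^ 2)
        * Real.exp (2 * c * t)) t := by
    intro t ht
    have h1 := (hg' t ht).pow 2
    have h2 : HasDerivAt (fun s : ℝ => Real.exp (2 * c * s))
        (Real.exp (2 * c * t) * (2 * c * 1)) t :=
      ((hasDerivAt_id t).const_mul (2 * c)).exp
    have h3 := h1.mul h2
    refine h3.congr_deriv ?_
    simp
    ring
  have hmono : MonotoneOn (fun s => f (γ s) ^ 2 * Real.exp (2 * c * s)) (Ici 0) := by
    apply monotoneOn_of_deriv_nonneg (convex_Ici 0)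
    · exact fun t ht => (hG' t ht).continuousAt.continuousWithinAt
    · intro t ht
      rw [interior_Ici] at ht
      exact (hG' t (le_of_lt ht)).differentiableAt.differentiableWithinAt
    · intro t ht
      rw [interior_Ici] at ht
      have ht' : (0:ℝ) ≤ t := le_of_lt ht
      rw [(hG' t ht').deriv]
      refine mul_nonneg ?_ (Real.exp_pos _).le
      have h1 := hineq _ (hγU t ht')
      have h2 : f (γ t) * fderiv ℝ f (γ t) (h (γ t)) ≤ c * f (γ t) ^ 2 := by
        calc _ ≤ |f (γ t) * fderiv ℝ f (γ t) (h (γ t))| := le_abs_self _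
          _ = |f (γ t)| * |fderiv ℝ f (γ t) (h (γ t))| := abs_mul _ _
          _ ≤ |f (γ t)| * (c * |f (γ t)|) := by gcongr
          _ = c * |f (γ t)| ^ 2 := by ring
          _ = _ := by rw [sq_abs]
      nlinarith
  have hsq : ∀ t : ℝ, 0 ≤ t → f (γ 0) ^ 2 ≤ (f (γ t) * Real.exp (c * t)) ^ 2 := by
    intro t ht
    have h1 := hmono (mem_Ici.2 le_rfl) (mem_Ici.2 ht) ht
    simp only [mul_zero, Real.exp_zero, mul_one] at h1
    have h2 : Real.exp (c * t) ^ 2 = Real.exp (2 * c * t) := by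
      rw [sq, ← Real.exp_add]
      congr 1
      ring
    rw [mul_pow, h2]
    exact h1
  have hpos : ∀ t : ℝ, 0 ≤ t → 0 < f (γ t) := by
    intro t ht
    by_contra hcon
    push Not at hcon
    have h1 := intermediate_value_Icc' ht (hgc.mono Icc_subset_Ici_self)
    obtain ⟨s, hs, hs0⟩ := h1 ⟨hcon, hfγ0.le⟩
    have h2 := hsq s hs.1
    simp only at hs0
    rw [hs0] at h2
    have := pow_pos hfγ0 2
    simp at h2
    linarith
  have hlow : ∀ t : ℝ, 0 ≤ t → f (γ 0) * Real.exp (-(c * t)) ≤ f (γ t) := by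
    intro t ht
    have h1 := (le_abs_self _).trans <| abs_le_of_sq_le_sq (hsq t ht)
      (mul_nonneg (hpos t ht).le (Real.exp_pos _).le)
    rw [Real.exp_neg, ← div_eq_mul_inv, div_le_iff₀ (Real.exp_pos _)]
    exact h1
  have hcontγ : ∀ t : ℝ, 0 ≤ t → ContinuousAt γ t := fun t ht => (hγ' t ht).continuousAt
  have hdecay' : ∀ t : ℝ, 0 ≤ t → ‖γ t‖ ≤ θ * Real.exp (-l * t) * ‖γ 0‖ := by
    intro t ht
    have h1 : Tendsto (fun s => ‖γ s‖) (𝓝[>] t) (𝓝 ‖γ t‖) :=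
      ((hcontγ t ht).norm.tendsto).mono_left nhdsWithin_le_nhds
    have h2 : Tendsto (fun s => θ * Real.exp (-l * s) * ‖γ 0‖) (𝓝[>] t)
        (𝓝 (θ * Real.exp (-l * t) * ‖γ 0‖)) := by
      refine Tendsto.mono_left (Continuous.tendsto ?_ t) nhdsWithin_le_nhds
      fun_prop
    refine le_of_tendsto_of_tendsto h1 h2 ?_
    filter_upwards [self_mem_nhdsWithin] with s hs
    exact hdecay s (lt_of_le_of_lt ht hs)
  have hn0 : 0 < ‖γ 0‖ := norm_pos_iff.2 hγ0
  have hK : 0 < θ * ‖γ 0‖ := mul_pos hθ hn0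
  have hp : 0 < c / l := div_pos hc hl
  have hKp : 0 < (θ * ‖γ 0‖) ^ (c / l) := Real.rpow_pos_of_pos hK _
  have main : ∀ t : ℝ, 0 ≤ t →
      (f (γ 0) / (θ * ‖γ 0‖) ^ (c / l)) * ‖γ t‖ ^ (c / l) ≤ f (γ t) := by
    intro t ht
    refine le_trans ?_ (hlow t ht)
    have h1 : ‖γ t‖ ^ (c / l) ≤ (θ * ‖γ 0‖) ^ (c / l) * Real.exp (-(c * t)) := by
      calc ‖γ t‖ ^ (c / l) ≤ ((θ * ‖γ 0‖) * Real.exp (-l * t)) ^ (c / l) := by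
            apply Real.rpow_le_rpow (norm_nonneg _) _ hp.le
            have := hdecay' t ht
            linarith
        _ = _ := by
            rw [Real.mul_rpow hK.le (Real.exp_pos _).le, ← Real.exp_mul]
            congr 2
            field_simp
    rw [div_mul_eq_mul_div, div_le_iff₀ hKp, mul_assoc]
    have h2 := mul_le_mul_of_nonneg_left h1 hfγ0.le
    linarith
  refine ⟨main, fun hflat => ?_⟩
  by_cases hz : ∃ t : ℝ, 0 ≤ t ∧ γ t = 0
  · obtain ⟨t, ht, htz⟩ := hz
    have hnt : Nontrivial (EuclideanSpace ℝ (Fin n)) := ⟨γ 0, 0, hγ0⟩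
    have hne : (𝓝[≠] (0 : EuclideanSpace ℝ (Fin n))).NeBot :=
      Module.punctured_nhds_neBot ℝ _ 0
    have h0 := hflat 0
    simp only [pow_zero, div_one] at h0
    have h1 : ContinuousAt f 0 := by
      have h2 := hγU t ht
      rw [htz] at h2
      exact hf.continuousOn.continuousAt (hU.mem_nhds h2)
    have h3 : Tendsto (fun x => |f x|) (𝓝[≠] (0 : EuclideanSpace ℝ (Fin n))) (𝓝 |f 0|) :=
      h1.abs.tendsto.mono_left nhdsWithin_le_nhds
    have h4 := tendsto_nhds_unique h0 h3
    have h5 := hpos t ht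
    rw [htz] at h5
    exact (abs_pos.2 h5.ne').ne h4
  · push Not at hz
    obtain ⟨k, hk⟩ := exists_nat_ge (c / l)
    have hγlim : Tendsto γ atTop (𝓝 0) := by
      refine squeeze_zero_norm' (a := fun t => θ * Real.exp (-l * t) * ‖γ 0‖) ?_ ?_
      · filter_upwards [eventually_ge_atTop 0] with t ht using hdecay' t ht
      · have h1 : Tendsto (fun t : ℝ => Real.exp (-l * t)) atTop (𝓝 0) :=
          Real.tendsto_exp_atBot.comp (tendsto_id.const_mul_atTop_of_neg (neg_neg_of_pos hl))
        simpa using (h1.const_mul θ).mul_const ‖γ 0‖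
    have hγlim' : Tendsto γ atTop (𝓝[≠] 0) := by
      refine tendsto_nhdsWithin_iff.2 ⟨hγlim, ?_⟩
      filter_upwards [eventually_ge_atTop 0] with t ht using hz t ht
    have h1 := (hflat k).comp hγlim'
    have hC : 0 < f (γ 0) / (θ * ‖γ 0‖) ^ (c / l) := div_pos hfγ0 hKp
    have h2 := h1.eventually_lt_const hC
    have h3 : ∀ᶠ t in atTop, ‖γ t‖ < 1 := by
      have := hγlim.norm
      rw [norm_zero] at this
      exact this.eventually_lt_const one_pos
    obtain ⟨t, h2, h3, ht⟩ := (h2.and (h3.and (eventually_ge_atTop 0))).exists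
    have hnt : 0 < ‖γ t‖ := norm_pos_iff.2 (hz t ht)
    simp only [Function.comp] at h2
    rw [div_lt_iff₀ (pow_pos hnt k), abs_of_pos (hpos t ht)] at h2
    have h4 : ‖γ t‖ ^ k ≤ ‖γ t‖ ^ (c / l) := by
      rw [← Real.rpow_natCast]
      exact Real.rpow_le_rpow_of_exponent_ge hnt h3.le hk
    have h5 := mul_le_mul_of_nonneg_left h4 hC.le
    linarith [main t ht]
end
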